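/- arXiv:0904.1380 — 2 statements merged into one kernel-verified Lean document; each statement's English description precedes it below -/
import Mathlib

section
/- Let G be a group, let (g,h) be a generating pair of G, let (u,v) be a pair of elements of G that is Nielsen equivalent to (g,h), and let g',h' ∈ G and m,n ≥ 1 be integers with g'^m = u and h'^n = v. Suppose (g',h') is invertible with inversion α'. Then (g,h) is also invertible, and for its inversion α there exists c ∈ G with α'(x) = c · α(x) · c⁻¹ for all x ∈ G; that is, α and α' determine the same element of the outer automorphism group Out(G). -/
/-!
Write `F` for the free group on `x, y`, and `ι` for the automorphism of `F` inverting `x` and `y`.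
The theorem reduces to a fact about `F`: for every automorphism `φ` of `F`, the automorphism
`j = φ ι φ⁻¹` differs from `ι` by an inner automorphism (`exists_conj_inversion`). Indeed, if
`π : F → G` is given by `(g, h)` and `(u, v) = (π (φ x), π (φ y))`, then `α'` inverts `u` and `v`,
so `π ∘ j = α' ∘ π`; from `j x = c x⁻¹ c⁻¹` and `j y = c y⁻¹ c⁻¹` it follows that `α'` composed with
conjugation by `π c⁻¹` inverts `g` and `h`.

The fact about `F` is proved without generators of `Aut F`, using the representation
`ρ : F → SL₂(ℤ)` with `x ↦ !![1, 4; 0, 1]` and `y ↦ !![1, 0; 4, 1]`.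

* For 2×2 matrices `P, Q` the commutator `D = PQ - QP` satisfies `adj(P) D = D P` and
  `adj(Q) D = D Q`. With `P = ρ (φ x)` and `Q = ρ (φ y)` this gives `ρ (j w) D = D ρ(w)` for all `w`
  (`intertwine`). As `ρ` is faithful, `D ≠ 0`, and neither column of `D` vanishes. Hence `ρ (j x)`
  and `ρ (j y)` fix the nonzero vectors `D e₁` and `D e₂`.
* Ping-pong on `ℤ²` shows that an element of `F` fixing a nonzero vector is conjugate to a power of
  `x` or of `y` (`conj_pow_of_fixes`). On the abelianization `j` is `-1`, so `j x` is conjugate to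
  `x⁻¹` and `j y` to `y⁻¹`.
* After conjugating, `j x = x⁻¹` and `j y = w y⁻¹ w⁻¹`. Comparing entries in the intertwining
  relation gives `(ρ w)₂₂² = 1`, and ping-pong again forces `w = xᵃ yᵇ` (`eq_pow_mul_pow`).
  Therefore `j` is conjugation by `xᵃ` after `ι`.
-/

/-- Nielsen equivalence of pairs of elements of a group. -/
def NielsenEquiv {G : Type*} [Group G] (g h g' h' : G) : Prop :=
  ∃ φ : FreeGroup (Fin 2) ≃* FreeGroup (Fin 2),
    FreeGroup.lift ![g', h'] = (FreeGroup.lift ![g, h]).comp φ.toMonoidHom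

namespace NielsenInversion

open FreeGroup (of mk mul_mk IsReduced isReduced_toWord mk_toWord)
open Matrix (SpecialLinearGroup adjugate_fin_two)

/-- The free group on two generators `x = of 0` and `y = of 1`. -/
abbrev F := FreeGroup (Fin 2)

/-! ### The representation and its action on `ℤ²` -/

/-- The matrix of `x`. -/
def X : SpecialLinearGroup (Fin 2) ℤ := ⟨!![1, 4; 0, 1], by simp⟩

/-- The matrix of `y`. -/
def Y : SpecialLinearGroup (Fin 2) ℤ := ⟨!![1, 0; 4, 1], by simp⟩

/-- The representation `F → SL₂(ℤ)` sending `x` to `X` and `y` to `Y`. -/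
def rho : F →* SpecialLinearGroup (Fin 2) ℤ := FreeGroup.lift ![X, Y]

/-- The underlying integer matrix of `rho w`. -/
def mat (w : F) : Matrix (Fin 2) (Fin 2) ℤ := (rho w : Matrix (Fin 2) (Fin 2) ℤ)

lemma mat_one : mat 1 = 1 := by simp [mat]

lemma mat_mul (a b : F) : mat (a * b) = mat a * mat b := by simp [mat]

lemma mat_inv (a : F) : mat a⁻¹ = (mat a).adjugate := by simp [mat]

lemma mat_inv_mul (a : F) : mat a⁻¹ * mat a = 1 := by
  rw [← mat_mul, inv_mul_cancel, mat_one]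

lemma mat_mul_inv (a : F) : mat a * mat a⁻¹ = 1 := by
  rw [← mat_mul, mul_inv_cancel, mat_one]

lemma mat_x : mat (of 0) = !![1, 4; 0, 1] := by simp [mat, rho, X]

lemma mat_y : mat (of 1) = !![1, 0; 4, 1] := by simp [mat, rho, Y]

/-- The linear action of `F` on column vectors in `ℤ²` through `rho`, a vector being a pair. -/
def act (w : F) (v : ℤ × ℤ) : ℤ × ℤ :=
  (mat w 0 0 * v.1 + mat w 0 1 * v.2, mat w 1 0 * v.1 + mat w 1 1 * v.2)

lemma act_one (v : ℤ × ℤ) : act 1 v = v := by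
  simp [act, mat_one]

lemma act_mul (a b : F) (v : ℤ × ℤ) : act (a * b) v = act a (act b v) := by
  simp only [act, mat_mul, Matrix.mul_apply, Fin.sum_univ_two]
  ext <;> simp only <;> ring

lemma act_inv_eq {a : F} {v w : ℤ × ℤ} (h : act a v = w) : act a⁻¹ w = v := by
  rw [← h, ← act_mul, inv_mul_cancel, act_one]

lemma act_x (v : ℤ × ℤ) : act (of 0) v = (v.1 + 4 * v.2, v.2) := by
  simp [act, mat_x]

lemma act_y (v : ℤ × ℤ) : act (of 1) v = (v.1, v.2 + 4 * v.1) := by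
  simp [act, mat_y, add_comm]

lemma act_x_inv (v : ℤ × ℤ) : act (of 0)⁻¹ v = (v.1 - 4 * v.2, v.2) :=
  act_inv_eq (by simp [act_x])

lemma act_y_inv (v : ℤ × ℤ) : act (of 1)⁻¹ v = (v.1, v.2 - 4 * v.1) :=
  act_inv_eq (by simp [act_y])

lemma act_x_zpow (k : ℤ) (v : ℤ × ℤ) : act (of 0 ^ k) v = (v.1 + 4 * k * v.2, v.2) := by
  induction k with
  | zero => simp [act_one]
  | succ n ih => rw [add_comm, zpow_add, zpow_one, act_mul, ih, act_x]; ext <;> simp; ring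
  | pred n ih =>
    rw [sub_eq_add_neg, add_comm, zpow_add, zpow_neg_one, act_mul, ih, act_x_inv]
    ext <;> simp; ring

lemma act_y_zpow (k : ℤ) (v : ℤ × ℤ) : act (of 1 ^ k) v = (v.1, v.2 + 4 * k * v.1) := by
  induction k with
  | zero => simp [act_one]
  | succ n ih => rw [add_comm, zpow_add, zpow_one, act_mul, ih, act_y]; ext <;> simp; ring
  | pred n ih =>
    rw [sub_eq_add_neg, add_comm, zpow_add, zpow_neg_one, act_mul, ih, act_y_inv]
    ext <;> simp; ring

lemma act_smul_iff (w : F) (r p q : ℤ) (hr : r ≠ 0) :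
    act w (r * p, r * q) = (r * p, r * q) ↔ act w (p, q) = (p, q) := by
  simp only [act, Prod.mk.injEq]
  constructor
  · rintro ⟨h1, h2⟩
    exact ⟨mul_left_cancel₀ hr (by linear_combination h1),
      mul_left_cancel₀ hr (by linear_combination h2)⟩
  · rintro ⟨h1, h2⟩
    exact ⟨by linear_combination r * h1, by linear_combination r * h2⟩

/-! ### Ping-pong -/

/-- The sector `|p| ≥ 2|q| > 0` in the half of the plane where `pq` is positive (`true`) or negative
(`false`). The boundary `|p| = 2|q|` belongs to the sector only in the negative case: `x` maps
the line `p = -2q` to the line `p = 2q` without changing `|p| + |q|`, and the latter must lie outside the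
regions for the descent in `exists_terminal` to stop there. -/
def Sector (s : Bool) (p q : ℤ) : Prop :=
  match s with
  | true => (0 < q ∧ 2 * q < p) ∨ (q < 0 ∧ p < 2 * q)
  | false => (0 < q ∧ p ≤ -2 * q) ∨ (q < 0 ∧ -2 * q ≤ p)

/-- The ping-pong region of the letter `(i, b)`: by `region_step`, a letter maps every region except
that of its inverse into its own region. -/
def Region (l : Fin 2 × Bool) (v : ℤ × ℤ) : Prop :=
  match l.1 with
  | 0 => Sector l.2 v.1 v.2
  | 1 => Sector l.2 v.2 v.1

lemma act_letter (l : Fin 2 × Bool) (v : ℤ × ℤ) : act (mk [l]) v =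
    match l with
    | (0, true) => (v.1 + 4 * v.2, v.2)
    | (0, false) => (v.1 - 4 * v.2, v.2)
    | (1, true) => (v.1, v.2 + 4 * v.1)
    | (1, false) => (v.1, v.2 - 4 * v.1) := by
  obtain ⟨i, b⟩ := l
  fin_cases i <;> cases b
  · exact act_x_inv v
  · exact act_x v
  · exact act_y_inv v
  · exact act_y v

lemma region_step (l l' : Fin 2 × Bool) (h : l'.1 = l.1 → l'.2 = l.2) (v : ℤ × ℤ)
    (hv : Region l v) : Region l' (act (mk [l']) v) := by
  rw [act_letter]
  obtain ⟨p, q⟩ := v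
  obtain ⟨i, b⟩ := l
  obtain ⟨i', b'⟩ := l'
  fin_cases i <;> fin_cases i' <;> cases b <;> cases b' <;>
    simp [Region, Sector] at h hv ⊢ <;> omega

/-- A nonzero vector off the axes and outside all four ping-pong regions. -/
def Good (v : ℤ × ℤ) : Prop := v.1 ≠ 0 ∧ v.2 ≠ 0 ∧ ∀ l, ¬ Region l v

lemma region_of_good (l : Fin 2 × Bool) (v : ℤ × ℤ) (hv : Good v) :
    Region l (act (mk [l]) v) := by
  rw [act_letter]
  obtain ⟨h1, h2, h⟩ := hv
  obtain ⟨p, q⟩ := v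
  have a1 := h (0, true)
  have a2 := h (0, false)
  have a3 := h (1, true)
  have a4 := h (1, false)
  obtain ⟨i, b⟩ := l
  fin_cases i <;> cases b <;>
    simp [Region, Sector] at h1 h2 a1 a2 a3 a4 ⊢ <;> omega

/-- Ping-pong started at a vector `v`. `T` is a property of words whose image of `v` need not lie
in a region, such as belonging to the stabilizer of `v`; it is enough that one more letter either
preserves `T` or leads into the region of that letter. -/
lemma ping_pong (v : ℤ × ℤ) (T : F → Prop) (h1 : T 1)
    (hT : ∀ w l, T w → T (mk [l] * w) ∨ Region l (act (mk [l] * w) v)) (w : F) :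
    T w ∨ ∃ l, Region l (act w v) := by
  have key : ∀ L : List (Fin 2 × Bool), IsReduced L →
      T (mk L) ∨ ∃ l, L.head? = some l ∧ Region l (act (mk L) v) := by
    intro L
    induction L with
    | nil => intro _; exact Or.inl h1
    | cons l L ih =>
      intro hL
      have hmk : mk (l :: L) = mk [l] * mk L := by rw [mul_mk]; rfl
      rw [hmk]
      rcases ih (hL.infix (List.suffix_cons l L).isInfix) with h | ⟨l₀, hl₀, h⟩
      · rcases hT _ l h with h | h
        · exact Or.inl h
        · exact Or.inr ⟨l, rfl, h⟩
      · right
        refine ⟨l, rfl, ?_⟩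
        rw [act_mul]
        refine region_step l₀ l ?_ _ h
        cases L with
        | nil => simp at hl₀
        | cons a L =>
          simp only [List.head?_cons, Option.some.injEq] at hl₀
          subst hl₀
          exact (List.isChain_cons_cons.1 hL).1
  rcases key w.toWord isReduced_toWord with h | ⟨l, _, h⟩
  · left; rwa [mk_toWord] at h
  · right; rw [mk_toWord] at h; exact ⟨l, h⟩

lemma good_pp (v : ℤ × ℤ) (hv : Good v) (w : F) (hw : act w v = v) : w = 1 := by
  rcases ping_pong v (fun w => w = 1) rfl (fun w l h => Or.inr (by
    rw [h, mul_one]; exact region_of_good l v hv)) w with h | ⟨l, h⟩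
  · exact h
  · rw [hw] at h; exact absurd h (hv.2.2 l)

lemma e1_pp (w : F) : (∃ k : ℤ, w = of 0 ^ k) ∨ ∃ l, Region l (act w (1, 0)) := by
  refine ping_pong (1, 0) (fun w => ∃ k : ℤ, w = of 0 ^ k) ⟨0, by simp⟩ ?_ w
  rintro w ⟨i, b⟩ ⟨k, rfl⟩
  fin_cases i <;> cases b
  · left; exact ⟨-1 + k, by rw [zpow_add, zpow_neg_one]; rfl⟩
  · left; exact ⟨1 + k, by rw [zpow_add, zpow_one]; rfl⟩
  all_goals
    right
    rw [act_mul, act_x_zpow, act_letter]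
    simp [Region, Sector]

lemma e2_pp (w : F) : (∃ k : ℤ, w = of 1 ^ k) ∨ ∃ l, Region l (act w (0, 1)) := by
  refine ping_pong (0, 1) (fun w => ∃ k : ℤ, w = of 1 ^ k) ⟨0, by simp⟩ ?_ w
  rintro w ⟨i, b⟩ ⟨k, rfl⟩
  fin_cases i <;> cases b
  rotate_left 2
  · left; exact ⟨-1 + k, by rw [zpow_add, zpow_neg_one]; rfl⟩
  · left; exact ⟨1 + k, by rw [zpow_add, zpow_one]; rfl⟩
  all_goals
    right
    rw [act_mul, act_y_zpow, act_letter]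
    simp [Region, Sector]

lemma fix_e1 (w : F) (hw : act w (1, 0) = (1, 0)) : ∃ k : ℤ, w = of 0 ^ k := by
  rcases e1_pp w with h | ⟨⟨i, b⟩, h⟩
  · exact h
  · rw [hw] at h
    fin_cases i <;> cases b <;> simp [Region, Sector] at h

lemma fix_e2 (w : F) (hw : act w (0, 1) = (0, 1)) : ∃ k : ℤ, w = of 1 ^ k := by
  rcases e2_pp w with h | ⟨⟨i, b⟩, h⟩
  · exact h
  · rw [hw] at h
    fin_cases i <;> cases b <;> simp [Region, Sector] at h

lemma rho_injective : Function.Injective rho := by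
  rw [injective_iff_map_eq_one]
  intro w hw
  have hact : ∀ v, act w v = v := by intro v; simp [act, mat, hw]
  obtain ⟨k, rfl⟩ := fix_e1 w (hact _)
  have := hact (0, 1)
  rw [act_x_zpow] at this
  have hk : k = 0 := by simpa using this
  simp [hk]

/-- Descent on `|p| + |q|`: every vector in a region is shortened by the inverse of the
corresponding letter, except on the boundary lines, where one step lands in a good vector. -/
lemma exists_terminal (n : ℕ) : ∀ v : ℤ × ℤ, v.1.natAbs + v.2.natAbs = n →
    ∃ c : F, (act c v).1 = 0 ∨ (act c v).2 = 0 ∨ Good (act c v) := by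
  induction n using Nat.strong_induction_on with
  | _ n ih =>
    intro v hn
    by_cases h1 : v.1 = 0
    · exact ⟨1, Or.inl (by rwa [act_one])⟩
    by_cases h2 : v.2 = 0
    · exact ⟨1, Or.inr (Or.inl (by rwa [act_one]))⟩
    by_cases hG : Good v
    · exact ⟨1, Or.inr (Or.inr (by rwa [act_one]))⟩
    have step : ∀ a : F, ((act a v).1.natAbs + (act a v).2.natAbs < n ∨ Good (act a v)) →
        ∃ c : F, (act c v).1 = 0 ∨ (act c v).2 = 0 ∨ Good (act c v) := by
      rintro a (h | h)
      · obtain ⟨c, hc⟩ := ih _ h _ rfl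
        exact ⟨c * a, by rwa [act_mul]⟩
      · exact ⟨a, Or.inr (Or.inr h)⟩
    obtain ⟨l, hl⟩ : ∃ l, Region l v := by
      by_contra hcon
      exact hG ⟨h1, h2, not_exists.1 hcon⟩
    obtain ⟨p, q⟩ := v
    simp only at h1 h2 hn
    obtain ⟨i, b⟩ := l
    fin_cases i <;> cases b
    · apply step (of 0)
      rw [act_x]
      simp [Region, Sector] at hl
      by_cases hb : p = -2 * q
      · right
        refine ⟨by simp only; omega, h2, ?_⟩
        rintro ⟨i, b⟩
        fin_cases i <;> cases b <;> simp [Region, Sector] <;> omega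
      · left; simp only; omega
    · apply step (of 0)⁻¹
      rw [act_x_inv]
      simp [Region, Sector] at hl
      left; simp only; omega
    · apply step (of 1)
      rw [act_y]
      simp [Region, Sector] at hl
      by_cases hb : q = -2 * p
      · right
        refine ⟨h1, by simp only; omega, ?_⟩
        rintro ⟨i, b⟩
        fin_cases i <;> cases b <;> simp [Region, Sector] <;> omega
      · left; simp only; omega
    · apply step (of 1)⁻¹
      rw [act_y_inv]
      simp [Region, Sector] at hl
      left; simp only; omega

lemma conj_pow_of_fixes (z : F) (v : ℤ × ℤ) (hv : v ≠ 0) (hz : act z v = v) :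
    ∃ (c : F) (i : Fin 2) (k : ℤ), z = c * of i ^ k * c⁻¹ := by
  obtain ⟨c, hc⟩ := exists_terminal _ v rfl
  have hfix : act (c * z * c⁻¹) (act c v) = act c v := by
    rw [← act_mul, inv_mul_cancel_right, act_mul, hz]
  have hne : act c v ≠ 0 := by
    intro h
    apply hv
    rw [← act_inv_eq h]
    simp [act]
  have back : ∀ y : F, c * z * c⁻¹ = y → z = c⁻¹ * y * c⁻¹⁻¹ := by
    rintro y rfl; group
  generalize act c v = t at *
  obtain ⟨p, q⟩ := t
  rcases hc with h | h | h
  · simp only at h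
    subst h
    have hq : q ≠ 0 := by rintro rfl; exact hne rfl
    obtain ⟨k, hk⟩ := fix_e2 _ ((act_smul_iff _ q 0 1 hq).1 (by simpa using hfix))
    exact ⟨c⁻¹, 1, k, back _ hk⟩
  · simp only at h
    subst h
    have hp : p ≠ 0 := by rintro rfl; exact hne rfl
    obtain ⟨k, hk⟩ := fix_e1 _ ((act_smul_iff _ p 1 0 hp).1 (by simpa using hfix))
    exact ⟨c⁻¹, 0, k, back _ hk⟩
  · exact ⟨c⁻¹, 0, 0, back _ (by rw [zpow_zero]; exact good_pp _ h _ hfix)⟩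

lemma eq_pow_mul_pow (w : F) (hw : mat w 1 1 ^ 2 = 1) :
    ∃ a b : ℤ, w = of 0 ^ a * of 1 ^ b := by
  set β := mat w 0 1 with hβ
  set δ := mat w 1 1 with hδ
  have hv : act w (0, 1) = (β, δ) := by simp [act, hβ, hδ]
  -- A power of `x` moves `βδ` into `{-1, 0, 1, 2}`, so the vector avoids all four regions.
  obtain ⟨a, ha⟩ : ∃ a : ℤ, -2 < β * δ + 4 * a ∧ β * δ + 4 * a ≤ 2 :=
    ⟨-((β * δ + 1) / 4), by omega, by omega⟩
  rcases e2_pp (of 0 ^ a * w) with ⟨k, hk⟩ | ⟨⟨i, b⟩, h⟩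
  · refine ⟨-a, k, ?_⟩
    rw [← hk]; group
  · exfalso
    rw [act_mul, hv, act_x_zpow] at h
    rcases (sq_eq_sq_iff_eq_or_eq_neg.1 (hw.trans (one_pow 2).symm)) with h1 | h1 <;> rw [h1] at h ha <;>
      fin_cases i <;> cases b <;> simp [Region, Sector] at h <;> omega

/-! ### The intertwining matrix -/

lemma adj_mul_comm (P Q : Matrix (Fin 2) (Fin 2) ℤ) :
    P.adjugate * (P * Q - Q * P) = (P * Q - Q * P) * P := by
  rw [adjugate_fin_two]
  ext i j
  fin_cases i <;> fin_cases j <;>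
    simp [Matrix.mul_apply, Fin.sum_univ_two] <;> ring

lemma adj_mul_comm' (P Q : Matrix (Fin 2) (Fin 2) ℤ) :
    Q.adjugate * (P * Q - Q * P) = (P * Q - Q * P) * Q := by
  have := adj_mul_comm Q P
  rw [← neg_sub (Q * P), mul_neg, neg_mul, this]

/-- The endomorphism of `F` inverting both generators. -/
def inv2 : F →* F := FreeGroup.lift fun i => (of i)⁻¹

/-- For `D` the commutator of the matrices of `φ x` and `φ y`, multiplication by `D` intertwines
`rho ∘ φ` with its twist by the inversion of `x` and `y`. -/
lemma intertwine (φ : F →* F) (w : F) :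
    mat (φ (inv2 w)) * (mat (φ (of 0)) * mat (φ (of 1)) -
        mat (φ (of 1)) * mat (φ (of 0))) =
      (mat (φ (of 0)) * mat (φ (of 1)) -
        mat (φ (of 1)) * mat (φ (of 0))) * mat (φ w) := by
  set D := mat (φ (of 0)) * mat (φ (of 1)) - mat (φ (of 1)) * mat (φ (of 0)) with hD
  induction w using FreeGroup.induction_on with
  | C1 => simp [mat_one]
  | of i =>
    have : inv2 (of i) = (of i)⁻¹ := by simp [inv2]
    rw [this, map_inv, mat_inv]
    fin_cases i
    · exact adj_mul_comm _ _
    · exact adj_mul_comm' _ _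
  | inv_of i h =>
    rw [map_inv, map_inv, map_inv]
    calc _ = mat (φ (inv2 (of i)))⁻¹ * (D * mat (φ (of i))) * mat (φ (of i))⁻¹ := by
          rw [mul_assoc, mul_assoc D, mat_mul_inv, mul_one]
      _ = _ := by rw [← h, ← mul_assoc, mat_inv_mul, one_mul]
  | mul a b ha hb =>
    rw [map_mul, map_mul, map_mul, mat_mul, mat_mul, mul_assoc, hb, ← mul_assoc, ha, mul_assoc]

lemma comm_ne_zero (φ : F ≃* F) : mat (φ (of 0)) * mat (φ (of 1)) -
    mat (φ (of 1)) * mat (φ (of 0)) ≠ 0 := by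
  intro h
  have h' := sub_eq_zero.1 h
  rw [← mat_mul, ← mat_mul, ← map_mul, ← map_mul] at h'
  have h2 := φ.injective (rho_injective (Subtype.ext h'))
  exact absurd h2 (by decide)

/-! ### Conjugacy of inversions -/

/-- The exponent sum of the generator `i`, as a homomorphism to `ℤ`. -/
def expSum (i : Fin 2) : F →* Multiplicative ℤ :=
  FreeGroup.lift fun k => Multiplicative.ofAdd (if k = i then 1 else 0)

lemma map_inv2 {A : Type*} [CommGroup A] (f : F →* A) (w : F) : f (inv2 w) = (f w)⁻¹ := by
  have : f.comp inv2 = f⁻¹ := by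
    ext i; simp [inv2]
  exact DFunLike.congr_fun this w

/-- A conjugate of a power of a generator whose exponent sums are those of `(of i)⁻¹` is conjugate
to `(of i)⁻¹`. -/
lemma conj_of_expSum {z : F} {i : Fin 2} (h : ∀ m, expSum m z = (expSum m (of i))⁻¹)
    (hz : ∃ (c : F) (i : Fin 2) (k : ℤ), z = c * of i ^ k * c⁻¹) :
    ∃ c : F, z = c * (of i)⁻¹ * c⁻¹ := by
  obtain ⟨c, m, k, rfl⟩ := hz
  have hi := h i
  have e : ∀ n l : Fin 2, Multiplicative.toAdd (expSum n (of l)) = if l = n then 1 else 0 := by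
    intro n l; simp [expSum]
  have hi' := congrArg Multiplicative.toAdd hi
  simp only [map_mul, map_inv, map_zpow, toAdd_mul, toAdd_inv, toAdd_zpow, e] at hi'
  by_cases hm : m = i
  · subst hm
    have : k = -1 := by simpa using hi'
    exact ⟨c, by rw [this, zpow_neg_one]⟩
  · simp [hm] at hi'

/-- The entrywise form of the last step: once `j x = x⁻¹` and `j y = w y⁻¹ w⁻¹`, the lower right
entry of `rho w` is `±1`. -/
lemma entry_sq (E : Matrix (Fin 2) (Fin 2) ℤ) (w : F) (hE : E 0 0 ≠ 0 ∨ E 1 0 ≠ 0)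
    (hx : mat (of 0)⁻¹ * E = E * mat (of 0))
    (hy : mat (w * (of 1)⁻¹ * w⁻¹) * E = E * mat (of 1)) :
    mat w 1 1 ^ 2 = 1 := by
  rw [mat_inv, mat_x] at hx
  rw [mat_mul, mat_mul, mat_inv, mat_inv, mat_y] at hy
  generalize mat w = W at *
  rw [adjugate_fin_two W] at hy
  have x00 := congrFun (congrFun hx 0) 0
  have x01 := congrFun (congrFun hx 0) 1
  have y10 := congrFun (congrFun hy 1) 0
  simp [Matrix.mul_apply, Fin.sum_univ_two] at x00 x01 y10
  have d : E 1 0 = 0 := by omega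
  have d' : E 1 1 = - E 0 0 := by omega
  have hne : E 0 0 ≠ 0 := by simpa [d] using hE
  rw [d, d'] at y10
  apply mul_left_cancel₀ (mul_ne_zero (by norm_num : (4 : ℤ) ≠ 0) hne)
  linear_combination -y10

/-- Conjugating the inversion of `x` and `y` by an automorphism of `F` changes it only by an inner
automorphism. -/
theorem exists_conj_inversion (φ : F ≃* F) :
    ∃ c : F, ∀ i, φ (inv2 (φ.symm (of i))) = c * (of i)⁻¹ * c⁻¹ := by
  set j : F →* F := φ.toMonoidHom.comp (inv2.comp φ.symm.toMonoidHom) with hj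
  have hexp : ∀ w m, expSum m (j w) = (expSum m w)⁻¹ := by
    intro w m
    have := map_inv2 ((expSum m).comp φ.toMonoidHom) (φ.symm w)
    simpa [hj] using this
  obtain ⟨D, hD0, hD⟩ : ∃ D : Matrix (Fin 2) (Fin 2) ℤ, D ≠ 0 ∧
      ∀ w, mat (j w) * D = D * mat w := by
    refine ⟨_, comm_ne_zero φ, fun w => ?_⟩
    have := intertwine φ.toMonoidHom (φ.symm w)
    simpa [hj] using this
  have ent := fun w i k => congrFun (congrFun (hD w) i) k
  have x0 := ent (of 0) 0
  have x1 := ent (of 0) 1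
  have y0 := ent (of 1) 0
  have y1 := ent (of 1) 1
  rw [mat_x] at x0 x1
  rw [mat_y] at y0 y1
  simp only [Matrix.mul_apply, Fin.sum_univ_two, Fin.forall_fin_two] at x0 x1 y0 y1
  simp at x0 x1 y0 y1
  -- The kernel of `D` is invariant under `rho`, so if one column vanishes then so does the other.
  have c0 : (D 0 0, D 1 0) ≠ 0 := by
    intro h
    obtain ⟨a, b⟩ : D 0 0 = 0 ∧ D 1 0 = 0 := by simpa using h
    rw [a, b] at y0 y1
    apply hD0
    ext i k
    fin_cases i <;> fin_cases k <;> simp [a, b] <;> omega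
  have c1 : (D 0 1, D 1 1) ≠ 0 := by
    intro h
    obtain ⟨a, b⟩ : D 0 1 = 0 ∧ D 1 1 = 0 := by simpa using h
    rw [a, b] at x0 x1
    apply hD0
    ext i k
    fin_cases i <;> fin_cases k <;> simp [a, b] <;> omega
  obtain ⟨c, hc⟩ := conj_of_expSum (i := 0) (hexp _)
    (conj_pow_of_fixes (j (of 0)) _ c0 (by ext <;> simp [act] <;> linarith))
  obtain ⟨e, he⟩ := conj_of_expSum (i := 1) (hexp _)
    (conj_pow_of_fixes (j (of 1)) _ c1 (by ext <;> simp [act] <;> linarith))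
  have conj : ∀ z w, j w = c * z * c⁻¹ →
      mat z * (mat c⁻¹ * D) = (mat c⁻¹ * D) * mat w := by
    intro z w h
    have hz : z = c⁻¹ * j w * c := by rw [h]; group
    rw [hz, mat_mul, mat_mul, mul_assoc, ← mul_assoc (mat c), mat_mul_inv, one_mul,
      mul_assoc, hD, mul_assoc]
  have hE : (mat c⁻¹ * D) 0 0 ≠ 0 ∨ (mat c⁻¹ * D) 1 0 ≠ 0 := by
    by_contra hcon
    push Not at hcon
    apply c0
    have h0 : act c⁻¹ (D 0 0, D 1 0) = 0 := by
      ext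
      · simpa [act, Matrix.mul_apply, Fin.sum_univ_two] using hcon.1
      · simpa [act, Matrix.mul_apply, Fin.sum_univ_two] using hcon.2
    rw [← act_inv_eq h0]
    simp [act]
  have hsq := entry_sq _ (c⁻¹ * e) hE (conj _ _ hc)
    (conj ((c⁻¹ * e) * (of 1)⁻¹ * (c⁻¹ * e)⁻¹) (of 1) (by rw [he]; group))
  obtain ⟨a, b, hab⟩ := eq_pow_mul_pow _ hsq
  have he' : e = c * of 0 ^ a * of 1 ^ b := by rw [mul_assoc, ← hab]; group
  refine ⟨c * of 0 ^ a, ?_⟩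
  rw [Fin.forall_fin_two]
  constructor
  · change j (of 0) = _
    rw [hc]; group
  · change j (of 1) = _
    rw [he, he']; group

end NielsenInversion

open NielsenInversion in
theorem stmt3 {G : Type*} [Group G] (g h u v g' h' : G) (m n : ℕ)
    (hgen : Subgroup.closure {g, h} = ⊤)
    (hN : NielsenEquiv g h u v)
    (hm : 1 ≤ m) (hn : 1 ≤ n)
    (hu : g' ^ m = u) (hv : h' ^ n = v)
    (hgen' : Subgroup.closure {g', h'} = ⊤)
    (α' : G ≃* G) (hα' : α' g' = g'⁻¹ ∧ α' h' = h'⁻¹) :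
    ∃ α : G ≃* G, (α g = g⁻¹ ∧ α h = h⁻¹) ∧
      ∃ c : G, ∀ x : G, α' x = c * α x * c⁻¹ := by
  obtain ⟨φ, hφ⟩ := hN
  have hαu : α' u = u⁻¹ := by rw [← hu, map_pow, hα'.1, inv_pow]
  have hαv : α' v = v⁻¹ := by rw [← hv, map_pow, hα'.2, inv_pow]
  set π := FreeGroup.lift ![g, h] with hπ
  have hcomp : (π.comp φ.toMonoidHom).comp inv2 =
      α'.toMonoidHom.comp (π.comp φ.toMonoidHom) := by
    rw [← hφ]
    ext i
    fin_cases i <;> simp [inv2, hαu, hαv]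
  obtain ⟨c, hc⟩ := exists_conj_inversion φ
  have key : ∀ i, α' (π (FreeGroup.of i)) = π c * (π (FreeGroup.of i))⁻¹ * (π c)⁻¹ := by
    intro i
    have h1 := DFunLike.congr_fun hcomp (φ.symm (FreeGroup.of i))
    have h2 : π (φ (inv2 (φ.symm (FreeGroup.of i)))) = α' (π (FreeGroup.of i)) := by
      simpa using h1
    rw [← h2, hc]
    simp
  have kg : α' g = π c * g⁻¹ * (π c)⁻¹ := by simpa [hπ] using key 0
  have kh : α' h = π c * h⁻¹ * (π c)⁻¹ := by simpa [hπ] using key 1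
  refine ⟨α'.trans (MulAut.conj (π c)⁻¹), ⟨?_, ?_⟩, π c, fun x => ?_⟩
  · simp only [MulEquiv.trans_apply, MulAut.conj_apply, kg]; group
  · simp only [MulEquiv.trans_apply, MulAut.conj_apply, kh]; group
  · simp only [MulEquiv.trans_apply, MulAut.conj_apply]; group
end

section
/- Let G be the presented group on three generators x, s₁, s₂ with relators s₁², s₂², x²s₁s₂ (the fundamental group of the Euclidean 2-orbifold P²(2,2)). Then every generating pair of G is Nielsen equivalent to (x, s₁). -/
/-- Relators of π₁(P²(2,2)) on generators x = of 0, s₁ = of 1, s₂ = of 2: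
the relators are s₁², s₂², x²s₁s₂. -/
def p22Rels : Set (FreeGroup (Fin 3)) :=
  {FreeGroup.of 1 ^ 2, FreeGroup.of 2 ^ 2,
   FreeGroup.of 0 ^ 2 * FreeGroup.of 1 * FreeGroup.of 2}

/-! ### Nielsen moves -/

section Nielsen

variable {G : Type*} [Group G] {g h g' h' g'' h'' : G}

lemma NielsenEquiv.trans (h₁ : NielsenEquiv g h g' h') (h₂ : NielsenEquiv g' h' g'' h'') :
    NielsenEquiv g h g'' h'' := by
  obtain ⟨φ, hφ⟩ := h₁
  obtain ⟨ψ, hψ⟩ := h₂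
  refine ⟨ψ.trans φ, ?_⟩
  rw [hψ, hφ]
  rfl

/-- A pair of mutually inverse endomorphisms of the free group gives a Nielsen equivalence. -/
lemma nielsenEquiv_of_inverse (f k : FreeGroup (Fin 2) →* FreeGroup (Fin 2))
    (hfk : f.comp k = MonoidHom.id _) (hkf : k.comp f = MonoidHom.id _)
    (h0 : FreeGroup.lift ![g, h] (f (FreeGroup.of 0)) = g')
    (h1 : FreeGroup.lift ![g, h] (f (FreeGroup.of 1)) = h') :
    NielsenEquiv g h g' h' := by
  refine ⟨MonoidHom.toMulEquiv f k hkf hfk, ?_⟩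
  ext i
  fin_cases i
  · simpa using h0.symm
  · simpa using h1.symm

lemma NielsenEquiv.refl (g h : G) : NielsenEquiv g h g h :=
  ⟨MulEquiv.refl _, rfl⟩

lemma nielsenEquiv_swap (g h : G) : NielsenEquiv g h h g := by
  refine nielsenEquiv_of_inverse (FreeGroup.lift ![FreeGroup.of 1, FreeGroup.of 0])
    (FreeGroup.lift ![FreeGroup.of 1, FreeGroup.of 0]) ?_ ?_ ?_ ?_ <;>
  first
  | (ext i; fin_cases i <;> simp)
  | simp

lemma nielsenEquiv_inv (g h : G) : NielsenEquiv g h g⁻¹ h := by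
  refine nielsenEquiv_of_inverse (FreeGroup.lift ![(FreeGroup.of 0)⁻¹, FreeGroup.of 1])
    (FreeGroup.lift ![(FreeGroup.of 0)⁻¹, FreeGroup.of 1]) ?_ ?_ ?_ ?_ <;>
  first
  | (ext i; fin_cases i <;> simp)
  | simp

lemma nielsenEquiv_zpow_mul (g h : G) (k : ℤ) : NielsenEquiv g h g (g ^ k * h) := by
  refine nielsenEquiv_of_inverse
    (FreeGroup.lift ![FreeGroup.of 0, FreeGroup.of 0 ^ k * FreeGroup.of 1])
    (FreeGroup.lift ![FreeGroup.of 0, FreeGroup.of 0 ^ (-k) * FreeGroup.of 1]) ?_ ?_ ?_ ?_ <;>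
  first
  | (ext i; fin_cases i <;> simp)
  | simp

lemma range_lift_pair (g h : G) :
    (FreeGroup.lift ![g, h]).range = Subgroup.closure {g, h} := by
  rw [FreeGroup.range_lift_eq_closure]
  congr 1
  rw [Matrix.range_cons, Matrix.range_cons, Matrix.range_empty, Set.union_empty,
    Set.singleton_union]

/-- Since a generating pair represents every element by a word, conjugation by any element is
induced by an inner automorphism of the free group. -/
lemma nielsenEquiv_conj (hgen : Subgroup.closure {g, h} = ⊤) (c : G) :
    NielsenEquiv g h (c * g * c⁻¹) (c * h * c⁻¹) := by
  rw [← range_lift_pair, MonoidHom.range_eq_top] at hgen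
  obtain ⟨w, rfl⟩ := hgen c
  refine ⟨MulAut.conj w, ?_⟩
  ext i
  fin_cases i <;> simp

lemma NielsenEquiv.closure_eq_top (hN : NielsenEquiv g h g' h')
    (hgen : Subgroup.closure {g, h} = ⊤) : Subgroup.closure {g', h'} = ⊤ := by
  rw [← range_lift_pair, MonoidHom.range_eq_top] at *
  obtain ⟨φ, hφ⟩ := hN
  rw [hφ]
  exact hgen.comp φ.surjective

end Nielsen

/-! ### Affine isometries of the integers -/

/-- The isometry `u ↦ e * u + t` of `ℤ`, where `e = ±1`; multiplication is composition. -/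
@[ext]
structure Aff where
  /-- The translation part. -/
  t : ℤ
  /-- The linear part. -/
  e : ℤˣ

namespace Aff

instance : Mul Aff := ⟨fun a b => ⟨a.e * b.t + a.t, a.e * b.e⟩⟩
instance : One Aff := ⟨⟨0, 1⟩⟩
instance : Inv Aff := ⟨fun a => ⟨-(a.e * a.t), a.e⟩⟩

@[simp] lemma mul_t (a b : Aff) : (a * b).t = a.e * b.t + a.t := rfl
@[simp] lemma mul_e (a b : Aff) : (a * b).e = a.e * b.e := rfl
@[simp] lemma one_t : (1 : Aff).t = 0 := rfl
@[simp] lemma one_e : (1 : Aff).e = 1 := rfl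
@[simp] lemma inv_t (a : Aff) : (a⁻¹).t = -(a.e * a.t) := rfl
@[simp] lemma inv_e (a : Aff) : (a⁻¹).e = a.e := rfl

instance : Group Aff := Group.ofLeftAxioms
  (by intro a b c; ext <;> simp <;> ring)
  (by intro a; ext <;> simp)
  (by intro a; ext <;> simp [Int.units_mul_self])

lemma zpow_of_e_eq_one {a : Aff} (ha : a.e = 1) (k : ℤ) : a ^ k = ⟨k * a.t, 1⟩ := by
  induction k using Int.induction_on with
  | zero => ext <;> simp
  | succ n ih => rw [zpow_add_one, ih]; ext <;> simp [ha]; ring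
  | pred n ih => rw [zpow_sub_one, ih]; ext <;> simp [ha]; ring

/-- The subgroup generated by the translation by `d` and the reflection
`u ↦ q - u`. -/
def dihedral (d q : ℤ) : Subgroup Aff where
  carrier := {a | (a.e = 1 ∧ d ∣ a.t) ∨ (a.e = -1 ∧ d ∣ a.t - q)}
  one_mem' := by simp
  mul_mem' := by
    rintro a b (⟨ha, ⟨i, hi⟩⟩ | ⟨ha, ⟨i, hi⟩⟩) (⟨hb, ⟨j, hj⟩⟩ | ⟨hb, ⟨j, hj⟩⟩)
    · left; simp only [mul_e, mul_t, ha, hb]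
      exact ⟨by simp, ⟨i + j, by push_cast; linear_combination hi + hj⟩⟩
    · right; simp only [mul_e, mul_t, ha, hb]
      exact ⟨by simp, ⟨i + j, by push_cast; linear_combination hi + hj⟩⟩
    · right; simp only [mul_e, mul_t, ha, hb]
      exact ⟨by simp, ⟨i - j, by push_cast; linear_combination hi - hj⟩⟩
    · left; simp only [mul_e, mul_t, ha, hb]
      exact ⟨by simp, ⟨i - j, by push_cast; linear_combination hi - hj⟩⟩
  inv_mem' := by
    rintro a (⟨ha, ⟨i, hi⟩⟩ | ⟨ha, ⟨i, hi⟩⟩)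
    · left; simp only [inv_e, inv_t, ha]
      exact ⟨by simp, ⟨-i, by push_cast; linear_combination -hi⟩⟩
    · right; simp only [inv_e, inv_t, ha]
      exact ⟨by simp, ⟨i, by push_cast; linear_combination hi⟩⟩

lemma mem_dihedral {d q : ℤ} {a : Aff} :
    a ∈ dihedral d q ↔ (a.e = 1 ∧ d ∣ a.t) ∨ (a.e = -1 ∧ d ∣ a.t - q) := Iff.rfl

/-- The linear part as a homomorphism. -/
def linearPart : Aff →* ℤˣ where
  toFun := Aff.e
  map_one' := rfl
  map_mul' _ _ := rfl

end Aff

/-! ### The group of P²(2,2) in coordinates -/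

namespace P22

/-- The fundamental group of P²(2,2). -/
abbrev G : Type := PresentedGroup p22Rels

/-- The glide reflection `x`. -/
abbrev x : G := PresentedGroup.of 0
/-- The half turn `s₁`. -/
abbrev s : G := PresentedGroup.of 1

lemma rel_eq_one {r : FreeGroup (Fin 3)} (hr : r ∈ p22Rels) :
    (PresentedGroup.mk p22Rels r) = 1 :=
  PresentedGroup.one_of_mem hr

lemma s_mul_s : s * s = 1 := by
  have := rel_eq_one (r := FreeGroup.of 1 ^ 2) (by simp [p22Rels])
  rwa [map_pow, pow_two] at this

lemma of_two_eq : (PresentedGroup.of 2 : G) = (x * x * s)⁻¹ := by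
  have := rel_eq_one (r := FreeGroup.of 0 ^ 2 * FreeGroup.of 1 * FreeGroup.of 2)
    (by simp [p22Rels])
  rw [map_mul, map_mul, map_pow, pow_two] at this
  exact eq_inv_of_mul_eq_one_right this

lemma xxs_sq : x * x * s * (x * x * s) = 1 := by
  have := rel_eq_one (r := FreeGroup.of 2 ^ 2) (by simp [p22Rels])
  rw [map_pow, pow_two] at this
  change (PresentedGroup.of 2 : G) * PresentedGroup.of 2 = 1 at this
  rw [of_two_eq, ← mul_inv_rev, inv_eq_one] at this
  exact this

/-- The action on the first coordinate: `x` is `u ↦ u + 1` and `s₁` is `u ↦ -u`. -/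
def coordU : G →* Aff :=
  PresentedGroup.toGroup (f := ![⟨1, 1⟩, ⟨0, -1⟩, ⟨2, -1⟩]) (by
    rintro r (rfl | rfl | rfl) <;> ext <;> simp [pow_two])

/-- The action on the second coordinate: `x` is `v ↦ 1 - v` and `s₁` is `v ↦ -v`. -/
def coordV : G →* Aff :=
  PresentedGroup.toGroup (f := ![⟨1, -1⟩, ⟨0, -1⟩, ⟨0, -1⟩]) (by
    rintro r (rfl | rfl | rfl) <;> ext <;> simp [pow_two])

@[simp] lemma coordU_x : coordU x = ⟨1, 1⟩ := by simp [coordU]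
@[simp] lemma coordU_s : coordU s = ⟨0, -1⟩ := by simp [coordU]
@[simp] lemma coordV_x : coordV x = ⟨1, -1⟩ := by simp [coordV]
@[simp] lemma coordV_s : coordV s = ⟨0, -1⟩ := by simp [coordV]

/-- The translation `x²` by `(2, 0)`. -/
def a : G := x * x
/-- The translation `(x s₁)²` by `(0, 2)`. -/
def b : G := x * s * (x * s)

lemma s_inv : s⁻¹ = s := inv_eq_of_mul_eq_one_left s_mul_s

lemma x_conj_a : x * a * x⁻¹ = a := by rw [a]; group

lemma s_conj_a : s * a * s⁻¹ = a⁻¹ := by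
  rw [eq_inv_iff_mul_eq_one, s_inv, a]
  have h := xxs_sq
  calc s * (x * x) * s * (x * x) = s * (x * x * s * (x * x * s)) * s⁻¹ := by group
    _ = 1 := by rw [h]; group

lemma xsx : x * s * x = x⁻¹ * s * x⁻¹ := by
  have h : x * x * s * (x * x) = s := by
    calc x * x * s * (x * x) = x * x * s * (x * x * s) * s⁻¹ := by group
      _ = s := by rw [xxs_sq, s_inv, one_mul]
  calc x * s * x = x⁻¹ * (x * x * s * (x * x)) * x⁻¹ := by group
    _ = _ := by rw [h]

lemma b_inv : b⁻¹ = s * x⁻¹ * s * x⁻¹ := by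
  simp only [b, mul_inv_rev, s_inv, mul_assoc]

lemma x_conj_b : x * b * x⁻¹ = b⁻¹ := by
  rw [b_inv]
  calc x * b * x⁻¹ = x * (x * s * x) * s * x⁻¹ := by rw [b]; group
    _ = _ := by rw [xsx]; group

lemma s_conj_b : s * b * s⁻¹ = b⁻¹ := by
  rw [b_inv]
  calc s * b * s⁻¹ = s * (x * s * x) := by rw [b]; group
    _ = _ := by rw [xsx]; group

lemma commute_a_b : Commute a b := by
  have h : x * s * a * (x * s)⁻¹ = a⁻¹ := by
    calc x * s * a * (x * s)⁻¹ = x * (s * a * s⁻¹) * x⁻¹ := by group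
      _ = (x * a * x⁻¹)⁻¹ := by rw [s_conj_a]; group
      _ = a⁻¹ := by rw [x_conj_a]
  have h2 : b * a * b⁻¹ = a := by
    calc b * a * b⁻¹ = x * s * (x * s * a * (x * s)⁻¹) * (x * s)⁻¹ := by rw [b]; group
      _ = x * s * a⁻¹ * (x * s)⁻¹ := by rw [h]
      _ = (x * s * a * (x * s)⁻¹)⁻¹ := conj_inv.symm
      _ = a := by rw [h, inv_inv]
  exact (mul_inv_eq_iff_eq_mul.mp h2).symm

lemma x_mul_ab (i j : ℤ) : x * (a ^ i * b ^ j) = a ^ i * b ^ (-j) * x := by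
  have h1 : x * a ^ i * x⁻¹ = a ^ i := by rw [← conj_zpow, x_conj_a]
  have h2 : x * b ^ j * x⁻¹ = b ^ (-j) := by rw [← conj_zpow, x_conj_b, inv_zpow']
  nth_rewrite 2 [← h1]
  rw [← h2]; group

lemma s_mul_ab (i j : ℤ) : s * (a ^ i * b ^ j) = a ^ (-i) * b ^ (-j) * s := by
  have h1 : s * a ^ i * s⁻¹ = a ^ (-i) := by rw [← conj_zpow, s_conj_a, inv_zpow']
  have h2 : s * b ^ j * s⁻¹ = b ^ (-j) := by rw [← conj_zpow, s_conj_b, inv_zpow']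
  rw [← h1, ← h2]; group

lemma ab_mul_ab (i j k l : ℤ) : a ^ i * b ^ j * (a ^ k * b ^ l) = a ^ (i + k) * b ^ (j + l) := by
  rw [zpow_add, zpow_add, mul_assoc, ← mul_assoc (b ^ j),
    (commute_a_b.zpow_zpow k j).eq.symm]
  group

lemma s_mul_x : s * x = a ^ (-1 : ℤ) * b ^ (-1 : ℤ) * (x * s) := by
  rw [zpow_neg_one, zpow_neg_one, b_inv, a]
  have : x * x * (s * x) = s * x⁻¹ * s * x⁻¹ * (x * s) := by
    calc x * x * (s * x) = x * (x * s * x) := by group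
      _ = s * x⁻¹ := by rw [xsx]; group
      _ = s * x⁻¹ * (s * s) := by rw [s_mul_s, mul_one]
      _ = _ := by group
  rw [mul_assoc, ← this]; group

/-- The elements of the point-group type of `w`: products of a translation with `w`. -/
def HasType (w g : G) : Prop := ∃ i j : ℤ, g = a ^ i * b ^ j * w

lemma HasType.ab_mul {w g : G} (h : HasType w g) (i j : ℤ) : HasType w (a ^ i * b ^ j * g) := by
  obtain ⟨k, l, rfl⟩ := h
  exact ⟨i + k, j + l, by rw [← ab_mul_ab]; group⟩

lemma normal_form (g : G) : HasType 1 g ∨ HasType x g ∨ HasType s g ∨ HasType (x * s) g := by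
  let S : Set G := {g | HasType 1 g ∨ HasType x g ∨ HasType s g ∨ HasType (x * s) g}
  have hab : ∀ g ∈ S, ∀ i j : ℤ, a ^ i * b ^ j * g ∈ S := by
    rintro g (h | h | h | h) i j
    · exact Or.inl (h.ab_mul i j)
    · exact Or.inr (Or.inl (h.ab_mul i j))
    · exact Or.inr (Or.inr (Or.inl (h.ab_mul i j)))
    · exact Or.inr (Or.inr (Or.inr (h.ab_mul i j)))
  have h1 : (1 : G) ∈ S := Or.inl ⟨0, 0, by simp⟩
  have hx : x ∈ S := Or.inr (Or.inl ⟨0, 0, by simp⟩)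
  have hs : s ∈ S := Or.inr (Or.inr (Or.inl ⟨0, 0, by simp⟩))
  have hxs : x * s ∈ S := Or.inr (Or.inr (Or.inr ⟨0, 0, by simp⟩))
  have hxx : x * x ∈ S := by simpa [a] using hab 1 h1 1 0
  have hxxs : x * (x * s) ∈ S := by simpa [a, mul_assoc] using hab s hs 1 0
  have hsx : s * x ∈ S := by rw [s_mul_x]; exact hab _ hxs _ _
  have hsxs : s * (x * s) ∈ S := by
    rw [← mul_assoc, s_mul_x, mul_assoc, mul_assoc x, s_mul_s, mul_one]
    exact hab _ hx _ _
  have hxS : ∀ g ∈ S, x * g ∈ S := by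
    rintro g (⟨i, j, rfl⟩ | ⟨i, j, rfl⟩ | ⟨i, j, rfl⟩ | ⟨i, j, rfl⟩) <;>
      rw [← mul_assoc, x_mul_ab, mul_assoc] <;> refine hab _ ?_ _ _
    · simpa using hx
    · exact hxx
    · exact hxs
    · exact hxxs
  have hsS : ∀ g ∈ S, s * g ∈ S := by
    rintro g (⟨i, j, rfl⟩ | ⟨i, j, rfl⟩ | ⟨i, j, rfl⟩ | ⟨i, j, rfl⟩) <;>
      rw [← mul_assoc, s_mul_ab, mul_assoc] <;> refine hab _ ?_ _ _
    · simpa using hs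
    · exact hsx
    · rw [s_mul_s]; exact h1
    · exact hsxs
  have hxS' : ∀ g ∈ S, x⁻¹ * g ∈ S := by
    intro g hg
    have := hab _ (hxS g hg) (-1) 0
    have e : a ^ (-1 : ℤ) * b ^ (0 : ℤ) * (x * g) = x⁻¹ * g := by rw [a]; group
    rwa [e] at this
  have h2S : ∀ g ∈ S, (PresentedGroup.of 2 : G) * g ∈ S := by
    intro g hg
    have e : (PresentedGroup.of 2 : G) * g = s * (x⁻¹ * (x⁻¹ * g)) := by
      rw [of_two_eq, mul_inv_rev, s_inv]; group
    rw [e]; exact hsS _ (hxS' _ (hxS' _ hg))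
  have h2S' : ∀ g ∈ S, (PresentedGroup.of 2 : G)⁻¹ * g ∈ S := by
    intro g hg
    have e : (PresentedGroup.of 2 : G)⁻¹ * g = x * (x * (s * g)) := by
      rw [of_two_eq, inv_inv]; simp only [mul_assoc]
    rw [e]; exact hxS _ (hxS _ (hsS _ hg))
  have hg : g ∈ Subgroup.closure (Set.range (PresentedGroup.of (rels := p22Rels))) := by
    rw [PresentedGroup.closure_range_of]; trivial
  change g ∈ S
  induction hg using Subgroup.closure_induction_left with
  | one => exact h1
  | mul_left y hy z _ hz =>
    obtain ⟨k, rfl⟩ := hy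
    fin_cases k
    · exact hxS _ hz
    · exact hsS _ hz
    · exact h2S _ hz
  | inv_mul_cancel y hy z _ hz =>
    obtain ⟨k, rfl⟩ := hy
    fin_cases k
    · exact hxS' _ hz
    · change s⁻¹ * z ∈ S
      rw [s_inv]; exact hsS _ hz
    · exact h2S' _ hz

@[simp] lemma coordU_ab (i j : ℤ) : coordU (a ^ i * b ^ j) = ⟨2 * i, 1⟩ := by
  have ha : coordU a = ⟨2, 1⟩ := by simp only [a, map_mul, coordU_x]; ext <;> simp
  have hb : coordU b = ⟨0, 1⟩ := by simp only [b, map_mul, coordU_x, coordU_s]; ext <;> simp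
  rw [map_mul, map_zpow, map_zpow, ha, hb, Aff.zpow_of_e_eq_one rfl, Aff.zpow_of_e_eq_one rfl]
  ext <;> simp [mul_comm]

@[simp] lemma coordV_ab (i j : ℤ) : coordV (a ^ i * b ^ j) = ⟨2 * j, 1⟩ := by
  have ha : coordV a = ⟨0, 1⟩ := by simp only [a, map_mul, coordV_x]; ext <;> simp
  have hb : coordV b = ⟨2, 1⟩ := by simp only [b, map_mul, coordV_x, coordV_s]; ext <;> simp
  rw [map_mul, map_zpow, map_zpow, ha, hb, Aff.zpow_of_e_eq_one rfl, Aff.zpow_of_e_eq_one rfl]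
  ext <;> simp [mul_comm]

lemma HasType.coords_one {g : G} (h : HasType 1 g) :
    ∃ i j : ℤ, coordU g = ⟨2 * i, 1⟩ ∧ coordV g = ⟨2 * j, 1⟩ := by
  obtain ⟨i, j, rfl⟩ := h
  exact ⟨i, j, by simp only [mul_one, coordU_ab, coordV_ab, and_self]⟩

lemma HasType.coords_x {g : G} (h : HasType x g) :
    ∃ i j : ℤ, coordU g = ⟨2 * i + 1, 1⟩ ∧ coordV g = ⟨2 * j + 1, -1⟩ := by
  obtain ⟨i, j, rfl⟩ := h
  refine ⟨i, j, ?_, ?_⟩ <;> rw [map_mul] <;> ext <;> simp [add_comm]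

lemma HasType.coords_s {g : G} (h : HasType s g) :
    ∃ i j : ℤ, coordU g = ⟨2 * i, -1⟩ ∧ coordV g = ⟨2 * j, -1⟩ := by
  obtain ⟨i, j, rfl⟩ := h
  refine ⟨i, j, ?_, ?_⟩ <;> rw [map_mul] <;> ext <;> simp

lemma HasType.coords_xs {g : G} (h : HasType (x * s) g) :
    ∃ i j : ℤ, coordU g = ⟨2 * i + 1, -1⟩ ∧ coordV g = ⟨2 * j + 1, 1⟩ := by
  obtain ⟨i, j, rfl⟩ := h
  refine ⟨i, j, ?_, ?_⟩ <;> 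
    simp only [map_mul (_ : G →* Aff) (_ * _) (x * s), map_mul (_ : G →* Aff) x s,
      coordU_ab, coordV_ab, coordU_x, coordU_s, coordV_x, coordV_s] <;>
    ext <;> simp [add_comm]

lemma neg_one_ne_one : (-1 : ℤˣ) ≠ 1 := by decide

/-- The type of an element is read off from the linear parts of its two coordinates. -/
lemma hasType_of_coords (g : G) :
    ((coordU g).e = 1 ∧ (coordV g).e = 1 ∧ HasType 1 g) ∨
    ((coordU g).e = 1 ∧ (coordV g).e = -1 ∧ HasType x g) ∨
    ((coordU g).e = -1 ∧ (coordV g).e = -1 ∧ HasType s g) ∨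
    ((coordU g).e = -1 ∧ (coordV g).e = 1 ∧ HasType (x * s) g) := by
  rcases normal_form g with h | h | h | h
  · obtain ⟨i, j, h1, h2⟩ := h.coords_one; simp [h1, h2, h]
  · obtain ⟨i, j, h1, h2⟩ := h.coords_x; simp [h1, h2, h]
  · obtain ⟨i, j, h1, h2⟩ := h.coords_s; simp [h1, h2, h]
  · obtain ⟨i, j, h1, h2⟩ := h.coords_xs; simp [h1, h2, h]

lemma coord_injective {g h : G} (hU : coordU g = coordU h) (hV : coordV g = coordV h) :
    g = h := by
  rw [← mul_inv_eq_one]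
  have hU' : coordU (g * h⁻¹) = 1 := by rw [map_mul, map_inv, hU, mul_inv_cancel]
  have hV' : coordV (g * h⁻¹) = 1 := by rw [map_mul, map_inv, hV, mul_inv_cancel]
  generalize g * h⁻¹ = k at *
  rcases hasType_of_coords k with ⟨-, -, i, j, rfl⟩ | ⟨h1, h2, -⟩ | ⟨h1, h2, -⟩ | ⟨h1, h2, -⟩
  · rw [mul_one] at *
    rw [coordU_ab] at hU'
    rw [coordV_ab] at hV'
    have hi := congrArg Aff.t hU'
    have hj := congrArg Aff.t hV'
    simp at hi hj
    simp [hi, hj]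
  · rw [hV'] at h2; exact absurd h2.symm neg_one_ne_one
  · rw [hV'] at h2; exact absurd h2.symm neg_one_ne_one
  · rw [hU'] at h1; exact absurd h1.symm neg_one_ne_one

/-! ### Generating pairs -/

lemma map_mem_of_generates {H : Type*} [Group H] {g h : G}
    (hgen : Subgroup.closure {g, h} = ⊤) (f : G →* H) (K : Subgroup H)
    (hg : f g ∈ K) (hh : f h ∈ K) (k : G) : f k ∈ K := by
  have hle : Subgroup.closure {g, h} ≤ K.comap f := by
    rw [Subgroup.closure_le]
    rintro y (rfl | rfl)
    · exact hg
    · exact hh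
  rw [hgen] at hle
  exact hle (Subgroup.mem_top k)

/-- The image of a generating pair under `coordU` or `coordV` generates all of `Aff`, so it lies
in no proper dihedral subgroup. -/
lemma dvd_one_of_generates {g h : G} (hgen : Subgroup.closure {g, h} = ⊤) {d q : ℤ}
    {f : G →* Aff} (hf : f = coordU ∨ f = coordV)
    (hg : f g ∈ Aff.dihedral d q) (hh : f h ∈ Aff.dihedral d q) : d ∣ 1 := by
  have key := map_mem_of_generates hgen f _ hg hh
  rcases hf with rfl | rfl
  · simpa [Aff.mem_dihedral, neg_one_ne_one.symm] using key x
  · have := key (x * s)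
    rw [map_mul, coordV_x, coordV_s] at this
    simpa [Aff.mem_dihedral, neg_one_ne_one.symm] using this

lemma nielsen_of_glide_halfturn {g h : G} (hgen : Subgroup.closure {g, h} = ⊤)
    (hg : HasType x g) (hh : HasType s h) : NielsenEquiv g h x s := by
  obtain ⟨m, n, hgU, hgV⟩ := hg.coords_x
  obtain ⟨p, q, hhU, hhV⟩ := hh.coords_s
  have hm : 2 * m + 1 ∣ 1 := by
    refine dvd_one_of_generates hgen (q := 2 * p) (Or.inl rfl) ?_ ?_
    · simp [Aff.mem_dihedral, hgU]
    · simp [Aff.mem_dihedral, hhU]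
  have hn : 2 * n + 1 - 2 * q ∣ 1 := by
    refine dvd_one_of_generates hgen (q := 2 * q) (Or.inr rfl) ?_ ?_
    · simp [Aff.mem_dihedral, hgV]
    · simp [Aff.mem_dihedral, hhV]
  rw [← isUnit_iff_dvd_one, Int.isUnit_iff] at hm hn
  -- `x * s` translates the second coordinate by `1`, hence this conjugation makes `h` fix `v = 0`.
  set c : G := (x * s) ^ (-q) with hc
  have hcV : coordV c = ⟨-q, 1⟩ := by
    have : coordV (x * s) = ⟨1, 1⟩ := by rw [map_mul, coordV_x, coordV_s]; ext <;> simp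
    rw [hc, map_zpow, this, Aff.zpow_of_e_eq_one rfl]; ext <;> simp
  have hN1 := nielsenEquiv_conj hgen c
  set g₁ := c * g * c⁻¹ with hg₁
  set h₁ := c * h * c⁻¹ with hh₁
  have hg₁V : coordV g₁ = ⟨2 * n + 1 - 2 * q, -1⟩ := by
    rw [hg₁, map_mul, map_mul, map_inv, hcV, hgV]; ext <;> simp; ring
  have hh₁V : coordV h₁ = ⟨0, -1⟩ := by
    rw [hh₁, map_mul, map_mul, map_inv, hcV, hhV]; ext <;> simp; ring
  obtain ⟨m₁, hg₁U, hm₁⟩ : ∃ m₁ : ℤ, coordU g₁ = ⟨m₁, 1⟩ ∧ (m₁ = 1 ∨ m₁ = -1) := by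
    refine ⟨(coordU c).e * (2 * m + 1), ?_, ?_⟩
    · rw [hg₁, map_mul, map_mul, map_inv, hgU]
      rcases Int.units_eq_one_or (coordU c).e with he | he <;> ext <;> simp [he]
    · rcases Int.units_eq_one_or (coordU c).e with he | he <;> simp [he] <;> omega
  obtain ⟨p₁, hh₁U⟩ : ∃ p₁ : ℤ, coordU h₁ = ⟨2 * p₁, -1⟩ := by
    refine ⟨(coordU c).e * p + (coordU c).t, ?_⟩
    rw [hh₁, map_mul, map_mul, map_inv, hhU]
    rcases Int.units_eq_one_or (coordU c).e with he | he <;> ext <;> simp [he] <;> ring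
  -- `g₁ ^ 2` is the translation by `(2 * m₁, 0)`.
  have hN2 := nielsenEquiv_zpow_mul g₁ h₁ (2 * (-(m₁ * p₁)))
  have hs : g₁ ^ (2 * (-(m₁ * p₁))) * h₁ = s := by
    have hmm : m₁ * m₁ = 1 := by rcases hm₁ with rfl | rfl <;> rfl
    apply coord_injective
    · rw [map_mul, map_zpow, hg₁U, hh₁U, Aff.zpow_of_e_eq_one rfl, coordU_s]
      ext
      · simp; linear_combination (-2 * p₁) * hmm
      · simp
    · have : coordV g₁ ^ (2 : ℤ) = 1 := by
        rw [hg₁V, zpow_two]; ext <;> simp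
      rw [map_mul, map_zpow, zpow_mul, this, one_zpow, one_mul, hh₁V, coordV_s]
  rw [hs] at hN2
  have hN := hN1.trans hN2
  have hgen₂ := hN.closure_eq_top hgen
  refine hN.trans ?_
  clear_value g₁
  have hconj : NielsenEquiv g₁ s (s * g₁ * s⁻¹) s := by
    simpa using nielsenEquiv_conj hgen₂ s
  rcases hm₁ with rfl | rfl <;> rcases hn with hn | hn <;> rw [hn] at hg₁V
  · have : g₁ = x := coord_injective (by rw [hg₁U, coordU_x]) (by rw [hg₁V, coordV_x])
    rw [this]; exact NielsenEquiv.refl _ _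
  · have : (s * g₁ * s⁻¹)⁻¹ = x := by
      apply coord_injective <;>
        simp only [map_inv, map_mul, hg₁U, hg₁V, coordU_x, coordU_s, coordV_x, coordV_s] <;>
        ext <;> simp
    rw [← this]; exact hconj.trans (nielsenEquiv_inv _ _)
  · have : g₁⁻¹ = x := by
      apply coord_injective <;>
        simp only [map_inv, hg₁U, hg₁V, coordU_x, coordV_x] <;> ext <;> simp
    simpa only [this] using nielsenEquiv_inv g₁ s
  · have : s * g₁ * s⁻¹ = x := by
      apply coord_injective <;>
        simp only [map_inv, map_mul, hg₁U, hg₁V, coordU_x, coordU_s, coordV_x, coordV_s] <;>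
        ext <;> simp
    rw [← this]; exact hconj

lemma hasType_x {g : G} (h1 : (coordU g).e = 1) (h2 : (coordV g).e = -1) : HasType x g := by
  rcases hasType_of_coords g with h | h | h | h <;> simp_all [neg_one_ne_one.symm]

lemma hasType_s {g : G} (h1 : (coordU g).e = -1) (h2 : (coordV g).e = -1) : HasType s g := by
  rcases hasType_of_coords g with h | h | h | h <;> simp_all [neg_one_ne_one.symm]

/-- Half turns and translations form a proper subgroup: their translation parts are even. -/
lemma not_both_even {g h : G} (hgen : Subgroup.closure {g, h} = ⊤)
    (hg : HasType 1 g ∨ HasType s g) (hh : HasType 1 h ∨ HasType s h) : False := by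
  have aux : ∀ k : G, HasType 1 k ∨ HasType s k → coordU k ∈ Aff.dihedral 2 0 := by
    rintro k (hk | hk)
    · obtain ⟨i, j, hU, -⟩ := hk.coords_one; simp [Aff.mem_dihedral, hU]
    · obtain ⟨i, j, hU, -⟩ := hk.coords_s; simp [Aff.mem_dihedral, hU]
  have := dvd_one_of_generates hgen (Or.inl rfl) (aux g hg) (aux h hh)
  omega

lemma not_both_one {g h : G} (hgen : Subgroup.closure {g, h} = ⊤) {f : G →* Aff}
    (hf : f = coordU ∨ f = coordV) (hg : (f g).e = 1) (hh : (f h).e = 1) : False := by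
  have := map_mem_of_generates hgen (Aff.linearPart.comp f) ⊥
    (by simpa [Aff.linearPart] using hg) (by simpa [Aff.linearPart] using hh) s
  rcases hf with rfl | rfl <;> simp [Aff.linearPart] at this

lemma nielsen_of_generates {g h : G} (hgen : Subgroup.closure {g, h} = ⊤) :
    NielsenEquiv g h x s := by
  -- `hmul` and `hmul'` are `(g, h) ↦ (g, g h)` and `(g, h) ↦ (h g, h)`.
  have hmul : NielsenEquiv g h g (g * h) := by simpa using nielsenEquiv_zpow_mul g h 1
  have hswap := nielsenEquiv_swap g h
  have hmul' : NielsenEquiv g h (h * g) h :=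
    (hswap.trans (by simpa using nielsenEquiv_zpow_mul h g 1)).trans (nielsenEquiv_swap _ _)
  have step : ∀ {g' h' : G}, NielsenEquiv g h g' h' → HasType x g' → HasType s h' →
      NielsenEquiv g h x s := fun hN h1 h2 =>
    hN.trans (nielsen_of_glide_halfturn (hN.closure_eq_top hgen) h1 h2)
  have bad := @not_both_one g h hgen
  rcases hasType_of_coords g with ⟨gU, gV, gT⟩ | ⟨gU, gV, gT⟩ | ⟨gU, gV, gT⟩ | ⟨gU, gV, gT⟩ <;>
  rcases hasType_of_coords h with ⟨hU, hV, hT⟩ | ⟨hU, hV, hT⟩ | ⟨hU, hV, hT⟩ | ⟨hU, hV, hT⟩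
  · exact (bad (Or.inl rfl) gU hU).elim
  · exact (bad (Or.inl rfl) gU hU).elim
  · exact (not_both_even hgen (Or.inl gT) (Or.inr hT)).elim
  · exact (bad (Or.inr rfl) gV hV).elim
  · exact (bad (Or.inl rfl) gU hU).elim
  · exact (bad (Or.inl rfl) gU hU).elim
  · exact nielsen_of_glide_halfturn hgen gT hT
  · exact step hmul gT (hasType_s (by simp [gU, hU]) (by simp [gV, hV]))
  · exact (not_both_even hgen (Or.inr gT) (Or.inl hT)).elim
  · exact step hswap hT gT
  · exact (not_both_even hgen (Or.inr gT) (Or.inr hT)).elim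
  · exact step (hmul.trans (nielsenEquiv_swap _ _))
      (hasType_x (by simp [gU, hU]) (by simp [gV, hV])) gT
  · exact (bad (Or.inr rfl) gV hV).elim
  · exact step (hswap.trans (by simpa using nielsenEquiv_zpow_mul h g 1)) hT
      (hasType_s (by simp [gU, hU]) (by simp [gV, hV]))
  · exact step hmul' (hasType_x (by simp [gU, hU]) (by simp [gV, hV])) hT
  · exact (bad (Or.inr rfl) gV hV).elim

end P22

theorem stmt5 (g h : PresentedGroup p22Rels)
    (hgen : Subgroup.closure {g, h} = ⊤) :
    NielsenEquiv g h (PresentedGroup.of 0) (PresentedGroup.of 1) :=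
  P22.nielsen_of_generates hgen
end
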